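/- arXiv:1403.0408 — 4 statements merged into one kernel-verified Lean document; each statement's English description precedes it below -/
import Mathlib

section
/- Let 𝒜 and ℬ be topological spaces, let U ⊆ 𝒜 × ℬ be open, let γ be any type, and let g : 𝒜 → γ and h : ℬ → γ satisfy g(a) = h(b) for every (a,b) ∈ U. If (a,b) ∈ U and (a',b') ∈ U satisfy (a,b) ≈_U (a',b'), then g(a) = g(a') and h(b) = h(b'). -/
/-!
On an open set `U` where `g q.1 = h q.2`, the function `q ↦ g q.1` is locally constant: `U` contains
an open box `A ×ˢ B` around `(a, b)`, and for `a' ∈ A` the point `(a', b)` lies in `U`, so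
`g a' = h b = g a`. Hence it is constant along paths in `U`. It is also constant along pairs with a
common first coordinate (trivially) or a common second coordinate (as it equals `h q.2`). Its level
sets are thus unions of classes of the generated equivalence relation.
-/

/-- The base relation on a subset `S` of a product of topological spaces:
`u ~ v` iff `u, v ∈ S` and (`u` and `v` are joined by a path in `S`, or they share
their first coordinate, or they share their second coordinate). -/
def CoordPathRel {𝒜 ℬ : Type*} [TopologicalSpace 𝒜] [TopologicalSpace ℬ]
    (S : Set (𝒜 × ℬ)) (u v : 𝒜 × ℬ) : Prop :=
  u ∈ S ∧ v ∈ S ∧ (JoinedIn S u v ∨ u.1 = v.1 ∨ u.2 = v.2)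

/-- `≈_S`: the equivalence relation generated by `CoordPathRel S`. -/
def EquivInSupp {𝒜 ℬ : Type*} [TopologicalSpace 𝒜] [TopologicalSpace ℬ]
    (S : Set (𝒜 × ℬ)) : 𝒜 × ℬ → 𝒜 × ℬ → Prop :=
  Relation.EqvGen (CoordPathRel S)

/-- Openness of `U` makes `q ↦ g q.1` locally constant on `U`, hence constant along paths in `U`. -/
theorem eq_fst_of_joinedIn {𝒜 ℬ : Type*} {γ : Type*} [TopologicalSpace 𝒜] [TopologicalSpace ℬ]
    {U : Set (𝒜 × ℬ)} (hU : IsOpen U) {g : 𝒜 → γ} {h : ℬ → γ}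
    (hgh : ∀ q ∈ U, g q.1 = h q.2) {u v : 𝒜 × ℬ} (huv : JoinedIn U u v) :
    g u.1 = g v.1 := by
  obtain ⟨p, hp⟩ := huv
  have hloc : IsLocallyConstant fun t => g (p t).1 := by
    rw [IsLocallyConstant.iff_eventually_eq]
    intro t
    -- The points `((p s).1, (p t).2)` stay in `U` for `s` near `t`.
    have hcont : Continuous fun s => ((p s).1, (p t).2) := by fun_prop
    filter_upwards [hcont.continuousAt.preimage_mem_nhds (hU.mem_nhds (hp t))] with s hs
    exact (hgh _ hs).trans (hgh _ (hp t)).symm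
  simpa using hloc.apply_eq_of_preconnectedSpace 0 1

/-- If `U ⊆ 𝒜 × ℬ` is open, `g : 𝒜 → γ` and `h : ℬ → γ` satisfy
`g a = h b` for every `(a,b) ∈ U`, and `(a,b) ≈_U (a',b')` for `(a,b), (a',b') ∈ U`,
then `g a = g a'` and `h b = h b'`. -/
theorem statement2 {𝒜 ℬ : Type*} {γ : Type*} [TopologicalSpace 𝒜] [TopologicalSpace ℬ]
    (U : Set (𝒜 × ℬ)) (hU : IsOpen U)
    (g : 𝒜 → γ) (h : ℬ → γ)
    (hgh : ∀ q ∈ U, g q.1 = h q.2)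
    (u v : 𝒜 × ℬ) (hu : u ∈ U) (hv : v ∈ U)
    (hequiv : EquivInSupp U u v) :
    g u.1 = g v.1 ∧ h u.2 = h v.2 := by
  unfold EquivInSupp at hequiv
  -- The conclusion is an equivalence relation in `u, v`, so only the generating pairs need work.
  clear hu hv
  induction hequiv with
  | rel x y hxy =>
    obtain ⟨hx, hy, hxy⟩ := hxy
    have hg : g x.1 = g y.1 := by
      rcases hxy with hj | h1 | h2
      · exact eq_fst_of_joinedIn hU hgh hj
      · rw [h1]
      · rw [hgh x hx, hgh y hy, h2]
    exact ⟨hg, by rw [← hgh x hx, ← hgh y hy, hg]⟩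
  | refl x => exact ⟨rfl, rfl⟩
  | symm x y _ ih => exact ⟨ih.1.symm, ih.2.symm⟩
  | trans x y z _ _ ih₁ ih₂ => exact ⟨ih₁.1.trans ih₂.1, ih₁.2.trans ih₂.2⟩
end

section
/- Let p_X : ℝ^d → ℝ and p_N : ℝ → ℝ be nonnegative functions whose positivity sets {x : p_X(x) > 0} and {n : p_N(n) > 0} are path-connected, and let f : ℝ^d → ℝ be continuous. Then the positivity set {(x,y) ∈ ℝ^d × ℝ : p_X(x) · p_N(y − f(x)) > 0} of the joint density of (X, f(X) + N) is path-connected. Consequently, in a structural equation model X_i = f_i(X_{PA(i)}) + N_i with continuous functions f_i and jointly independent noise variables whose densities have path-connected support, the joint density of (X_1, …, X_p) has path-connected support (by induction along a causal ordering). -/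
/-!
Both positivity sets are continuous images of products of path-connected sets of noise values.
In the bivariate case the set is the image of `{pX > 0} ×ˢ {pN > 0}` under the shear
`(x, n) ↦ (x, n + f x)`.

In a structural equation model the solution `x` of `x i = n i + f i x` depends continuously on the
noise `n`: since parents precede their children, each application of the map
`x ↦ (i ↦ n i + f i x)` (`semStep`) makes one more coordinate independent of the starting point
(`semStep_iterate_congr`). After `p` applications every coordinate is settled, so `semStep^[p]`
is constant and its value is the unique solution. The positivity set of the joint density is
then the image of `∏ i, {pN i > 0}` under this solution map. This replaces the induction along the
causal ordering.
-/

/-- One simultaneous evaluation of all structural equations `X_i = f_i(X) + N_i` at the current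
values `x`, with noise `n`. -/
def semStep {p : ℕ} (f : Fin p → (Fin p → ℝ) → ℝ) (n x : Fin p → ℝ) : Fin p → ℝ :=
  fun i => n i + f i x

lemma semStep_iterate_congr {p : ℕ} {PA : Fin p → Finset (Fin p)} {f : Fin p → (Fin p → ℝ) → ℝ}
    (hPA : ∀ i j, j ∈ PA i → j < i)
    (hf : ∀ i, ∀ x y : Fin p → ℝ, (∀ j ∈ PA i, x j = y j) → f i x = f i y)
    (n x y : Fin p → ℝ) (k : ℕ) :
    ∀ i : Fin p, (i : ℕ) < k → (semStep f n)^[k] x i = (semStep f n)^[k] y i := by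
  induction k with
  | zero => intro i hi; omega
  | succ k ih =>
    intro i hi
    rw [Function.iterate_succ_apply', Function.iterate_succ_apply']
    refine congrArg (n i + ·) (hf i _ _ fun j hj => ih j ?_)
    have := Fin.lt_def.mp (hPA i j hj)
    omega

lemma continuous_semStep_iterate {p : ℕ} {f : Fin p → (Fin p → ℝ) → ℝ}
    (hf : ∀ i, Continuous (f i)) (k : ℕ) :
    Continuous fun n : Fin p → ℝ => (semStep f n)^[k] 0 := by
  induction k with
  | zero => exact continuous_const
  | succ k ih =>
    simp only [Function.iterate_succ_apply']
    exact continuous_pi fun i => (continuous_apply i).add ((hf i).comp ih)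

/-- (1) If `p_X : ℝ^d → ℝ` and `p_N : ℝ → ℝ` are nonnegative with
path-connected positivity sets and `f : ℝ^d → ℝ` is continuous, then the positivity set
of the joint density `(x,y) ↦ p_X(x)·p_N(y − f(x))` of `(X, f(X) + N)` is path-connected.
(2) Consequently, in a structural equation model `X_i = f_i(X_{PA(i)}) + N_i` (here with
the identity as a causal ordering, i.e. parents have smaller index) with continuous
functions and independent noises whose densities have path-connected support, the joint
density `x ↦ ∏ i, p_{N_i}(x_i − f_i(x_{PA(i)}))` has path-connected support. -/
theorem statement9 :
    (∀ (d : ℕ) (pX : (Fin d → ℝ) → ℝ) (pN : ℝ → ℝ) (f : (Fin d → ℝ) → ℝ),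
      (∀ x, 0 ≤ pX x) → (∀ n, 0 ≤ pN n) →
      IsPathConnected {x | 0 < pX x} → IsPathConnected {n | 0 < pN n} →
      Continuous f →
      IsPathConnected {q : (Fin d → ℝ) × ℝ | 0 < pX q.1 * pN (q.2 - f q.1)}) ∧
    (∀ (p : ℕ) (PA : Fin p → Finset (Fin p)) (f : Fin p → (Fin p → ℝ) → ℝ)
        (pN : Fin p → ℝ → ℝ),
      (∀ i j, j ∈ PA i → j < i) →
      (∀ i, Continuous (f i)) →
      (∀ i, ∀ x y : Fin p → ℝ, (∀ j ∈ PA i, x j = y j) → f i x = f i y) →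
      (∀ i n, 0 ≤ pN i n) →
      (∀ i, IsPathConnected {n | 0 < pN i n}) →
      IsPathConnected {x : Fin p → ℝ | 0 < ∏ i, pN i (x i - f i x)}) := by
  constructor
  · intro d pX pN f hX hN hcX hcN hf
    have himage : {q : (Fin d → ℝ) × ℝ | 0 < pX q.1 * pN (q.2 - f q.1)} =
        (fun q : (Fin d → ℝ) × ℝ => (q.1, q.2 + f q.1)) ''
          ({x | 0 < pX x} ×ˢ {n | 0 < pN n}) := by
      ext ⟨x, y⟩
      constructor
      · intro h
        have h' : 0 < pX x * pN (y - f x) := h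
        exact ⟨(x, y - f x), ⟨pos_of_mul_pos_left h' (hN _), pos_of_mul_pos_right h' (hX _)⟩,
          by simp⟩
      · rintro ⟨⟨x', n⟩, ⟨hx, hn⟩, h⟩
        obtain ⟨rfl, rfl⟩ := Prod.mk.inj h
        simpa using mul_pos hx hn
    rw [himage]
    exact (hcX.prod hcN).image (by fun_prop)
  · intro p PA f pN hPA hf hdep hN hcN
    have hconst : ∀ n x y : Fin p → ℝ, (semStep f n)^[p] x = (semStep f n)^[p] y :=
      fun n x y => funext fun i => semStep_iterate_congr hPA hdep n x y p i i.isLt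
    have himage : {x : Fin p → ℝ | 0 < ∏ i, pN i (x i - f i x)} =
        (fun n : Fin p → ℝ => (semStep f n)^[p] 0) ''
          Set.univ.pi fun i => {n | 0 < pN i n} := by
      ext x
      constructor
      · intro (h : 0 < ∏ i, pN i (x i - f i x))
        have hne := Finset.prod_ne_zero_iff.mp h.ne'
        refine ⟨fun i => x i - f i x,
          fun i _ => lt_of_le_of_ne (hN i _) (hne i (Finset.mem_univ i)).symm, ?_⟩
        have hfix : semStep f (fun i => x i - f i x) x = x :=
          funext fun i => sub_add_cancel _ _
        exact (hconst _ 0 x).trans (Function.iterate_fixed hfix p)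
      · rintro ⟨n, hn, rfl⟩
        -- A constant iterate takes a value fixed by the map: `S (S^[p] 0) = S^[p] (S 0) = S^[p] 0`.
        have hfix : semStep f n ((semStep f n)^[p] 0) = (semStep f n)^[p] 0 := by
          rw [← Function.iterate_succ_apply' (semStep f n), Function.iterate_succ_apply]
          exact hconst n _ _
        rw [Set.mem_ofPred_eq]
        refine Finset.prod_pos fun i _ => ?_
        have hi : n i + f i ((semStep f n)^[p] 0) = (semStep f n)^[p] 0 i := congrFun hfix i
        dsimp only
        rw [← hi, add_sub_cancel_right]
        exact hn i trivial
    rw [himage]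
    exact (IsPathConnected.pi hcN).image (continuous_semStep_iterate hf p)
end

section
/- (Counterexample to the intersection property.) Let p_A := (1/2)·𝟙_{[−2,−1] ∪ [1,2]}, and let u := (5/3)·𝟙_{[−0.3, 0.3]} (the uniform density on [−0.3,0.3]). Let f : ℝ → ℝ be any continuous function with f(b) = 10 for all b > 0.5 and f(b) = 0 for all b < −0.5. Define q : ℝ³ → ℝ by q(a,b,x) := p_A(a) · u(b − a) · u(x − f(b)). Then q is a probability density on ℝ³ (with respect to Lebesgue measure) for variables (A,B,X) which satisfies, in the density sense, X ⊥ A | B and X ⊥ B | A, but neither X ⊥ A nor X ⊥ B; in particular X ⊥ (A,B) fails, so the intersection property fails for q. -/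
/-!
On the support of `p_A(a)·u(b − a)` the numbers `a` and `b` have the same sign and `|b| > 1/2`, so
`f b` equals `shift a`, which is `10` for `a > 0` and `0` otherwise. Hence
`q a b x = p_A(a)·u(b − a)·u(x − f b) = p_A(a)·u(b − a)·u(x − shift a)` (`density_eq_shift`): the
first form shows that `X` depends on `(A, B)` only through `B`, the second that it does so only
through `A`. This gives both conditional independences, after integrating out single coordinates.

The unconditional independences fail because, at `x = 0`, the conditional density of `X` is `5/3`
at negative and `0` at positive values of `a` or `b`, so the marginal density of `X` at `0` would
have to be both `5/3` and `0`.
-/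

open MeasureTheory

/-- The density of `A`: `(1/2)·𝟙_{[−2,−1] ∪ [1,2]}`. -/
noncomputable def pA (a : ℝ) : ℝ :=
  (1 / 2) * (Set.Icc (-2 : ℝ) (-1) ∪ Set.Icc 1 2).indicator 1 a

/-- The uniform density on `[−0.3, 0.3]`: `(5/3)·𝟙_{[−0.3,0.3]}`. -/
noncomputable def uDen (y : ℝ) : ℝ :=
  (5 / 3) * (Set.Icc (-(0.3 : ℝ)) 0.3).indicator 1 y

theorem uDen_eq (y : ℝ) : uDen y = if -0.3 ≤ y ∧ y ≤ 0.3 then 5 / 3 else 0 := by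
  simp only [uDen, Set.indicator_apply, Set.mem_Icc, Pi.one_apply]
  split_ifs <;> simp

theorem pA_eq (a : ℝ) :
    pA a = if (-2 ≤ a ∧ a ≤ -1) ∨ (1 ≤ a ∧ a ≤ 2) then 1 / 2 else 0 := by
  simp only [pA, Set.indicator_apply, Set.mem_union, Set.mem_Icc, Pi.one_apply]
  split_ifs <;> simp

theorem uDen_nonneg (y : ℝ) : 0 ≤ uDen y := by
  rw [uDen_eq]; split_ifs <;> norm_num

theorem pA_nonneg (a : ℝ) : 0 ≤ pA a := by
  rw [pA_eq]; split_ifs <;> norm_num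

theorem uDen_le (y : ℝ) : uDen y ≤ 5 / 3 := by
  rw [uDen_eq]; split_ifs <;> norm_num

theorem pA_le (a : ℝ) : pA a ≤ 1 / 2 := by
  rw [pA_eq]; split_ifs <;> norm_num

theorem measurable_uDen : Measurable uDen :=
  (measurable_one.indicator measurableSet_Icc).const_mul _

theorem measurable_pA : Measurable pA :=
  (measurable_one.indicator (measurableSet_Icc.union measurableSet_Icc)).const_mul _

theorem integral_uDen : ∫ y, uDen y = 1 := by
  simp only [uDen]
  rw [integral_const_mul, integral_indicator_one measurableSet_Icc]
  simp only [Measure.real, Real.volume_Icc]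
  rw [ENNReal.toReal_ofReal (by norm_num)]
  norm_num

theorem integral_pA : ∫ a, pA a = 1 := by
  simp only [pA]
  rw [integral_const_mul,
    integral_indicator_one (measurableSet_Icc.union measurableSet_Icc),
    measureReal_union _ measurableSet_Icc measure_Icc_lt_top.ne measure_Icc_lt_top.ne]
  · simp only [Measure.real, Real.volume_Icc]
    rw [ENNReal.toReal_ofReal (by norm_num), ENNReal.toReal_ofReal (by norm_num)]
    norm_num
  · rw [Set.disjoint_left]
    rintro x ⟨_, h1⟩ ⟨h2, _⟩
    linarith

theorem integral_uDen_sub_right (c : ℝ) : ∫ y, uDen (y - c) = 1 := by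
  rw [integral_sub_right_eq_self uDen c, integral_uDen]

theorem integral_uDen_sub_left (c : ℝ) : ∫ y, uDen (c - y) = 1 := by
  rw [integral_sub_left_eq_self uDen volume c, integral_uDen]

/-- The common value of `f` at all `b` within `0.3` of a point `a` of the support of `pA`. -/
noncomputable def shift (a : ℝ) : ℝ := if 0 < a then 10 else 0

/-- On the support of `pA a * uDen (b - a)`, the value `f b` depends on `a` alone. -/
theorem density_eq_shift (f : ℝ → ℝ) (hf10 : ∀ b : ℝ, b > 0.5 → f b = 10)
    (hf0 : ∀ b : ℝ, b < -0.5 → f b = 0) (a b x : ℝ) :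
    pA a * uDen (b - a) * uDen (x - f b) = pA a * uDen (b - a) * uDen (x - shift a) := by
  rw [pA_eq a, uDen_eq (b - a)]
  split_ifs with h1 h2
  · rcases h1 with h1 | h1
    · rw [hf0 b (by norm_num at *; linarith), shift, if_neg (by linarith)]
    · rw [hf10 b (by norm_num at *; linarith), shift, if_pos (by linarith)]
  all_goals simp

/-- The marginal density of `B` at `±3/2`; there the window `b ± 0.3` lies inside the support
of `pA`. -/
theorem integral_pA_mul_uDen (b : ℝ) (hb : b = 3 / 2 ∨ b = -(3 / 2)) :
    ∫ a, pA a * uDen (b - a) = 1 / 2 := by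
  have h : ∀ a, pA a * uDen (b - a) = 1 / 2 * uDen (b - a) := by
    intro a
    rw [uDen_eq]
    split_ifs with h
    · rw [pA_eq, if_pos]
      norm_num at h
      rcases hb with rfl | rfl
      · right; constructor <;> linarith
      · left; constructor <;> linarith
    · simp
  simp_rw [h]
  rw [integral_const_mul, integral_uDen_sub_left, mul_one]

/-- The density is bounded and vanishes outside a box, hence is integrable. -/
theorem integrable_density (f : ℝ → ℝ) (hf : Continuous f)
    (hf10 : ∀ b : ℝ, b > 0.5 → f b = 10) (hf0 : ∀ b : ℝ, b < -0.5 → f b = 0) :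
    Integrable (fun v : ℝ × ℝ × ℝ => pA v.1 * uDen (v.2.1 - v.1) * uDen (v.2.2 - f v.2.1)) := by
  have hmeas : Measurable
      (fun v : ℝ × ℝ × ℝ => pA v.1 * uDen (v.2.1 - v.1) * uDen (v.2.2 - f v.2.1)) := by
    have := hf.measurable
    have := measurable_pA
    have := measurable_uDen
    fun_prop
  have hsupp : Function.support
      (fun v : ℝ × ℝ × ℝ => pA v.1 * uDen (v.2.1 - v.1) * uDen (v.2.2 - f v.2.1)) ⊆
      Set.Icc ((-2, -3, -1) : ℝ × ℝ × ℝ) (2, 3, 11) := by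
    rintro ⟨a, b, x⟩ h
    simp only [Function.mem_support] at h
    rw [density_eq_shift f hf10 hf0, pA_eq, uDen_eq, uDen_eq] at h
    have h1 : (-2 ≤ a ∧ a ≤ -1) ∨ (1 ≤ a ∧ a ≤ 2) := by
      by_contra h'; simp [h'] at h
    have h2 : -0.3 ≤ b - a ∧ b - a ≤ 0.3 := by
      by_contra h'; simp only [if_neg h'] at h; simp at h
    have h3 : -0.3 ≤ x - shift a ∧ x - shift a ≤ 0.3 := by
      by_contra h'; simp only [if_neg h'] at h; simp at h
    have h4 : 0 ≤ shift a ∧ shift a ≤ 10 := by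
      unfold shift; split_ifs <;> norm_num
    norm_num at h2 h3
    have h5 : -2 ≤ a ∧ a ≤ 2 := by
      rcases h1 with h1 | h1 <;> constructor <;> linarith
    refine ⟨⟨h5.1, ?_, ?_⟩, h5.2, ?_, ?_⟩ <;> simp only <;> linarith
  rw [← integrableOn_iff_integrable_of_support_subset hsupp]
  refine Measure.integrableOn_of_bounded (M := 1 / 2 * (5 / 3) * (5 / 3))
    isCompact_Icc.measure_lt_top.ne hmeas.aestronglyMeasurable (ae_of_all _ fun v => ?_)
  have h1 := pA_nonneg v.1
  have h2 := uDen_nonneg (v.2.1 - v.1)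
  have h3 := uDen_nonneg (v.2.2 - f v.2.1)
  rw [Real.norm_of_nonneg (by positivity)]
  gcongr
  · exact pA_le _
  · exact uDen_le _
  · exact uDen_le _

/-- Counterexample to the intersection property. For any continuous
`f : ℝ → ℝ` with `f = 10` on `(0.5, ∞)` and `f = 0` on `(−∞, −0.5)`, the function
`q(a,b,x) = p_A(a)·u(b−a)·u(x−f(b))` is a probability density on `ℝ³` for `(A,B,X)`
which satisfies `X ⊥ A | B` and `X ⊥ B | A`, but neither `X ⊥ A` nor `X ⊥ B`;
in particular `X ⊥ (A,B)` fails. -/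
theorem statement12 (f : ℝ → ℝ) (hf : Continuous f)
    (hf10 : ∀ b : ℝ, b > 0.5 → f b = 10)
    (hf0 : ∀ b : ℝ, b < -0.5 → f b = 0)
    (q : ℝ → ℝ → ℝ → ℝ)
    (hq : ∀ a b x, q a b x = pA a * uDen (b - a) * uDen (x - f b)) :
    (∀ a b x, 0 ≤ q a b x) ∧
    Measurable (fun v : ℝ × ℝ × ℝ => q v.1 v.2.1 v.2.2) ∧
    (∫ v : ℝ × ℝ × ℝ, q v.1 v.2.1 v.2.2) = 1 ∧
    -- X ⊥ A | B
    (∀ x a b, 0 < (∫ a', ∫ x', q a' b x') →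
      q a b x * (∫ a', ∫ x', q a' b x')
        = (∫ a', q a' b x) * (∫ x', q a b x')) ∧
    -- X ⊥ B | A
    (∀ x a b, 0 < (∫ b', ∫ x', q a b' x') →
      q a b x * (∫ b', ∫ x', q a b' x')
        = (∫ b', q a b' x) * (∫ x', q a b x')) ∧
    -- ¬ (X ⊥ A)
    ¬ (∀ x a, (∫ b', q a b' x)
        = (∫ a', ∫ b', q a' b' x) * (∫ b', ∫ x', q a b' x')) ∧
    -- ¬ (X ⊥ B)
    ¬ (∀ x b, (∫ a', q a' b x)
        = (∫ a', ∫ b', q a' b' x) * (∫ a', ∫ x', q a' b x')) ∧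
    -- ¬ (X ⊥ (A,B))
    ¬ (∀ x a b, q a b x = (∫ a', ∫ b', q a' b' x) * (∫ x', q a b x')) := by
  obtain rfl : q = fun a b x => pA a * uDen (b - a) * uDen (x - f b) := by
    funext a b x; exact hq a b x
  clear hq
  beta_reduce
  have hX : ∀ a b, ∫ x', pA a * uDen (b - a) * uDen (x' - f b) = pA a * uDen (b - a) := by
    intro a b
    rw [integral_const_mul, integral_uDen_sub_right, mul_one]
  have hBX : ∀ a, ∫ b', pA a * uDen (b' - a) = pA a := by
    intro a
    rw [integral_const_mul, integral_uDen_sub_right, mul_one]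
  have hB : ∀ a x, ∫ b', pA a * uDen (b' - a) * uDen (x - f b') = pA a * uDen (x - shift a) := by
    intro a x
    simp_rw [density_eq_shift f hf10 hf0]
    rw [integral_mul_const, hBX]
  have hA : ∀ b x, ∫ a', pA a' * uDen (b - a') * uDen (x - f b)
      = (∫ a', pA a' * uDen (b - a')) * uDen (x - f b) := by
    intro b x
    rw [integral_mul_const]
  have hint := integrable_density f hf hf10 hf0
  have u0 : uDen 0 = 5 / 3 := by rw [uDen_eq, if_pos (by norm_num)]
  have u10 : uDen (-10) = 0 := by rw [uDen_eq, if_neg (by norm_num)]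
  have p1 : pA 1 = 1 / 2 := by rw [pA_eq, if_pos (by norm_num)]
  have p1' : pA (-1) = 1 / 2 := by rw [pA_eq, if_pos (by norm_num)]
  have s1 : shift 1 = 10 := by norm_num [shift]
  have s1' : shift (-1) = 0 := by norm_num [shift]
  simp only [hX, hBX, hB, hA]
  refine ⟨?_, ?_, ?_, ?_, ?_, ?_, ?_, ?_⟩
  · intro a b x
    exact mul_nonneg (mul_nonneg (pA_nonneg _) (uDen_nonneg _)) (uDen_nonneg _)
  · have := hf.measurable
    have := measurable_pA
    have := measurable_uDen
    fun_prop
  · rw [Measure.volume_eq_prod, integral_prod _ hint, ← integral_pA]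
    congr 1
    funext a
    -- For fixed `a` the second form of the density is a product in `b` and `x`.
    simp_rw [density_eq_shift f hf10 hf0, mul_assoc]
    rw [integral_const_mul, Measure.volume_eq_prod,
      integral_prod_mul (fun b => uDen (b - a)) (fun x => uDen (x - shift a)),
      integral_uDen_sub_right, integral_uDen_sub_right]
    simp
  · intro x a b _
    ring
  · intro x a b _
    rw [density_eq_shift f hf10 hf0]
    ring
  · intro h
    have e1 := h 0 1
    have e2 := h 0 (-1)
    norm_num [s1, s1', u0, u10, p1, p1'] at e1 e2
    linarith
  · intro h
    have e1 := h 0 (3 / 2)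
    have e2 := h 0 (-(3 / 2))
    rw [integral_pA_mul_uDen _ (by norm_num), hf10 _ (by norm_num), zero_sub, u10] at e1
    rw [integral_pA_mul_uDen _ (by norm_num), hf0 _ (by norm_num), sub_zero, u0] at e2
    linarith
  · intro h
    have e1 := h 0 1 1
    have e2 := h 0 (-1) (-1)
    rw [hf10 _ (by norm_num), zero_sub, u10, sub_self, u0, p1] at e1
    rw [hf0 _ (by norm_num), sub_zero, sub_self, u0, p1'] at e2
    linarith
end

section
/- Let 𝒜, ℬ be metric spaces, let p : 𝒜 × ℬ → ℝ be continuous and nonnegative, and let U := {(a,b) : p(a,b) > 0}. Suppose (a,b), (a',b') ∈ U are joined by a path lying in U. Then there exists a finite sequence (a,b) = (a_0,b_0), (a_1,b_1), …, (a_n,b_n) = (a',b') of points of U together with points (a_1*, b_1*), …, (a_n*, b_n*) such that for each k: p(a_k*, b_{k−1}) > 0, p(a_k*, b_k*) > 0, and p(a_k, b_k*) > 0; i.e. consecutive points of the sequence can be linked through points of U by changing one coordinate at a time. -/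
/-!
Call `x` and `y` linked when both lie in `{p > 0}` and some `z` satisfies the three positivity
conditions of the theorem. If `p x > 0` and `y` is close to `x`, then the mixed points
`(x.1, y.2)` and `(y.1, x.2)` also lie in the open set `{p > 0}`, so `z = x` links `x` to `y` and
`y` to `x`. Hence the transitive closure of the link relation holds locally, in both directions,
along the path, and connectedness of `[0,1]` (`IsPreconnected.induction₂'`) propagates it from one
end to the other. `exists_chain_of_reflTransGen` turns the closure into an explicit finite chain.
-/

/-- Both points lie in `{p > 0}`, and one gets from `x` to `y` through points of `{p > 0}` by
changing one coordinate at a time, via `(z.1, x.2)`, `z` and `(y.1, z.2)`. -/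
def Linked {A B : Type*} (p : A × B → ℝ) (x y : A × B) : Prop :=
  0 < p x ∧ 0 < p y ∧ ∃ z : A × B, 0 < p (z.1, x.2) ∧ 0 < p z ∧ 0 < p (y.1, z.2)

lemma exists_chain_of_reflTransGen {A B : Type*} {p : A × B → ℝ} {u v : A × B} (hv : 0 < p v)
    (h : Relation.ReflTransGen (Linked p) u v) :
    ∃ (n : ℕ) (w : Fin (n + 1) → A × B) (wstar : Fin n → A × B),
      w 0 = u ∧ w (Fin.last n) = v ∧ (∀ k, 0 < p (w k)) ∧
      ∀ k : Fin n,
        0 < p ((wstar k).1, (w k.castSucc).2) ∧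
        0 < p (wstar k) ∧
        0 < p ((w k.succ).1, (wstar k).2) := by
  induction h using Relation.ReflTransGen.head_induction_on with
  | refl => exact ⟨0, fun _ => v, Fin.elim0, rfl, rfl, fun _ => hv, fun k => k.elim0⟩
  | @head x y hxy _ ih =>
    obtain ⟨n, w, ws, h0, hl, hU, hk⟩ := ih
    obtain ⟨hx, _, z, h1, h2, h3⟩ := hxy
    refine ⟨n + 1, Fin.cons x w, Fin.cons z ws, rfl, ?_, ?_, ?_⟩
    · rw [← Fin.succ_last, Fin.cons_succ, hl]
    · intro k
      cases k using Fin.cases with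
      | zero => exact hx
      | succ k => exact hU k
    · intro k
      cases k using Fin.cases with
      | zero =>
        refine ⟨h1, h2, ?_⟩
        simpa only [Fin.cons_succ, Fin.cons_zero, h0] using h3
      | succ k =>
        simpa only [Fin.cons_succ, Fin.castSucc_succ] using hk k

lemma eventually_linked {A B : Type*} [TopologicalSpace A] [TopologicalSpace B]
    {p : A × B → ℝ} (hp : Continuous p) {x : A × B} (hx : 0 < p x) :
    ∀ᶠ y in nhds x, Linked p x y ∧ Linked p y x := by
  have h1 : ∀ᶠ y in nhds x, 0 < p y := hp.continuousAt.eventually_const_lt hx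
  have h2 : ∀ᶠ y in nhds x, 0 < p (x.1, y.2) :=
    (show ContinuousAt (fun y : A × B => p (x.1, y.2)) x by fun_prop).eventually_const_lt hx
  have h3 : ∀ᶠ y in nhds x, 0 < p (y.1, x.2) :=
    (show ContinuousAt (fun y : A × B => p (y.1, x.2)) x by fun_prop).eventually_const_lt hx
  filter_upwards [h1, h2, h3] with y h1 h2 h3
  exact ⟨⟨hx, h1, x, hx, hx, h3⟩, ⟨h1, hx, x, h2, hx, hx⟩⟩

/-- Finite-chain covering argument. If `p : 𝒜 × ℬ → ℝ` is continuous and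
nonnegative and two points of `U = {p > 0}` are joined by a path in `U`, then they can
be linked by a finite sequence of points of `U` such that consecutive points are
connected through intermediate points of `U` by changing one coordinate at a time. -/
theorem statement14 {𝒜 ℬ : Type*} [MetricSpace 𝒜] [MetricSpace ℬ]
    (p : 𝒜 × ℬ → ℝ) (hcont : Continuous p) (hnn : ∀ q, 0 ≤ p q)
    (U : Set (𝒜 × ℬ)) (hUdef : U = {q | 0 < p q})
    (u v : 𝒜 × ℬ) (hu : u ∈ U) (hv : v ∈ U)
    (hjoin : JoinedIn U u v) :
    ∃ (n : ℕ) (w : Fin (n + 1) → 𝒜 × ℬ) (wstar : Fin n → 𝒜 × ℬ),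
      w 0 = u ∧ w (Fin.last n) = v ∧ (∀ k, w k ∈ U) ∧
      ∀ k : Fin n,
        0 < p ((wstar k).1, (w k.castSucc).2) ∧
        0 < p (wstar k) ∧
        0 < p ((w k.succ).1, (wstar k).2) := by
  subst hUdef
  refine exists_chain_of_reflTransGen hv ?_
  obtain ⟨γ, hγ⟩ := hjoin
  have key : Relation.ReflTransGen (Linked p) (γ 0) (γ 1) := by
    refine isPreconnected_univ.induction₂'
      (fun s t : unitInterval => Relation.ReflTransGen (Linked p) (γ s) (γ t)) ?_ ?_
      (Set.mem_univ 0) (Set.mem_univ 1)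
    · intro s _
      rw [nhdsWithin_univ]
      filter_upwards [γ.continuous.continuousAt.eventually (eventually_linked hcont (hγ s))]
        with t ht
      exact ⟨.single ht.1, .single ht.2⟩
    · intro r s t _ _ _ hrs hst
      exact hrs.trans hst
  simpa using key
end
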